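/- Let d ≥ 1, let z_1, …, z_n ∈ 𝔹_d and w_1, …, w_n ∈ ℂ. If there exists an analytic function φ : 𝔹_d → ℂ with |φ(z)| ≤ 1 for all z ∈ 𝔹_d and φ(z_i) = w_i for i = 1,…,n, then the n×n matrix with (i,j) entry (1 − w_i w̄_j) · (1 − ⟨z_i, z_j⟩)^{-d} is positive semidefinite, where ⟨z, w⟩ = Σ_{k=1}^d z_k w̄_k. -/

import Mathlib

open Complex ComplexConjugate
open scoped ComplexOrder

/-- The open unit ball `𝔹_d` of `ℂ^d` (for the Hermitian norm `‖z‖² = Σ_k |z_k|²`). -/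
def EucBall (d : ℕ) : Set (Fin d → ℂ) := {z | ∑ k, ‖z k‖ ^ 2 < 1}

open MeasureTheory Metric Set

section PartOne
variable {E : Type*} [NormedAddCommGroup E] [InnerProductSpace ℂ E] [FiniteDimensional ℂ E]
  [MeasurableSpace E] [BorelSpace E] [Nontrivial E]

theorem pk_rot (μ : Measure E) [μ.IsAddHaarMeasure] (c : ℂ) (hc : ‖c‖ = 1) :
    MeasurePreserving (fun x : E => c • x) μ μ := by
  have : FiniteDimensional ℝ E := FiniteDimensional.complexToReal E
  have : ProperSpace E := FiniteDimensional.proper ℂ E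
  have hc0 : c ≠ 0 := by rintro rfl; simp at hc
  let e : E ≃L[ℂ] E := ContinuousLinearEquiv.smulLeft (Units.mk0 c hc0)
  have he : ∀ x, e x = c • x := fun x => rfl
  have hm : Measurable (fun x : E => c • x) := (continuous_const_smul c).measurable
  refine ⟨hm, ?_⟩
  have : (μ.map (fun x : E => c • x)).IsAddHaarMeasure :=
    e.isAddHaarMeasure_map μ
  have h := Measure.isAddLeftInvariant_eq_smul (μ.map (fun x : E => c • x)) μ
  have hb : (μ.map (fun x : E => c • x)) (ball 0 1) = μ (ball 0 1) := by
    rw [Measure.map_apply hm measurableSet_ball]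
    congr 1
    ext x
    simp [norm_smul, hc]
  rw [h] at hb
  have hpos : μ (ball (0:E) 1) ≠ 0 := (measure_ball_pos μ 0 one_pos).ne'
  have hfin : μ (ball (0:E) 1) ≠ ⊤ := measure_ball_lt_top.ne
  have h1 : (Measure.addHaarScalarFactor (μ.map (fun x : E => c • x)) μ : ENNReal) = 1 := by
    have h2 : (Measure.addHaarScalarFactor (μ.map (fun x : E => c • x)) μ : ENNReal) * μ (ball (0:E) 1)
      = 1 * μ (ball (0:E) 1) := by
      rw [one_mul]; exact hb
    exact (ENNReal.mul_left_inj hpos hfin).1 h2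
  have h3 : Measure.addHaarScalarFactor (μ.map (fun x : E => c • x)) μ = 1 := by exact_mod_cast h1
  rw [h3, one_smul] at h
  exact h

theorem pk_gauss_int (μ : Measure E) [μ.IsAddHaarMeasure] :
    Integrable (fun x : E => Real.exp (-‖x‖ ^ 2 / 2)) μ := by
  have : FiniteDimensional ℝ E := FiniteDimensional.complexToReal E
  have := (integrable_fun_norm_addHaar μ (f := fun r : ℝ => Real.exp (-r ^ 2 / 2))).2 ?_
  · exact this
  have h := integrableOn_rpow_mul_exp_neg_mul_sq (b := 1/2) (by norm_num)
    (s := ((Module.finrank ℝ E - 1 : ℕ) : ℝ)) (by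
      have : (0:ℝ) ≤ ((Module.finrank ℝ E - 1 : ℕ) : ℝ) := by positivity
      linarith)
  refine h.congr_fun (fun x hx => ?_) measurableSet_Ioi
  simp only [Real.rpow_natCast, smul_eq_mul]
  congr 2
  ring

theorem pk_integrable (μ : Measure E) [μ.IsAddHaarMeasure] {H : E → ℂ} (hH : Continuous H) (C : ℝ)
    (hb : ∀ x, ‖H x‖ ≤ C * Real.exp (-‖x‖ ^ 2 / 2)) : Integrable H μ :=
  Integrable.mono' ((pk_gauss_int μ).const_mul C) hH.aestronglyMeasurable
    (Filter.Eventually.of_forall hb)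

theorem pk_avg (μ : Measure E) [μ.IsAddHaarMeasure] {H : E → ℂ} (hH : Continuous H) (C : ℝ)
    (hb : ∀ x, ‖H x‖ ≤ C * Real.exp (-‖x‖ ^ 2 / 2)) :
    ∫ x, Real.circleAverage (fun l : ℂ => H (l • x)) 0 1 ∂μ = ∫ x, H x ∂μ := by
  have : FiniteDimensional ℝ E := FiniteDimensional.complexToReal E
  have : ProperSpace E := FiniteDimensional.proper ℂ E
  simp only [Real.circleAverage_def]
  rw [integral_smul]
  have hpi : (0:ℝ) ≤ 2 * Real.pi := by positivity
  simp only [intervalIntegral.integral_of_le hpi]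
  rw [integral_integral_swap]
  · have : ∀ θ : ℝ, ∫ x, H (circleMap 0 1 θ • x) ∂μ = ∫ x, H x ∂μ := by
      intro θ
      have hne : circleMap 0 1 θ ≠ 0 := circleMap_ne_center one_ne_zero
      have hn : ‖circleMap 0 1 θ‖ = 1 := by simp
      exact (pk_rot μ _ hn).integral_comp
        (Homeomorph.smulOfNeZero (circleMap 0 1 θ) hne).measurableEmbedding H
    simp only [this]
    have hp := Real.pi_ne_zero
    simp [max_eq_left hpi]
    field_simp
  · have hc : Continuous (fun p : E × ℝ => H (circleMap 0 1 p.2 • p.1)) := by fun_prop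
    refine Integrable.mono' (g := fun p : E × ℝ => (C * Real.exp (-‖p.1‖ ^ 2 / 2)) * 1) ?_
      hc.aestronglyMeasurable ?_
    · exact ((pk_gauss_int μ).const_mul C).mul_prod (integrable_const (1:ℝ))
    · refine Filter.Eventually.of_forall fun p => ?_
      have := hb (circleMap 0 1 p.2 • p.1)
      simpa [norm_smul, Function.uncurry] using this

/-- mean value -/
theorem pk_mean (μ : Measure E) [μ.IsAddHaarMeasure] {G : E → ℂ} (hG : Differentiable ℂ G) (C : ℝ)
    (hb : ∀ x, ‖G x * Real.exp (-‖x‖ ^ 2)‖ ≤ C * Real.exp (-‖x‖ ^ 2 / 2)) :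
    ∫ x, G x * Real.exp (-‖x‖ ^ 2) ∂μ = G 0 * ∫ x : E, (Real.exp (-‖x‖ ^ 2) : ℂ) ∂μ := by
  have hGc := hG.continuous
  rw [← pk_avg μ (by fun_prop) C hb, ← integral_const_mul]
  congr 1
  ext x
  have h1 : Real.circleAverage (fun l : ℂ => G (l • x) * Real.exp (-‖l • x‖ ^ 2)) 0 1
      = Real.circleAverage (fun l : ℂ => (Real.exp (-‖x‖ ^ 2)) • G (l • x)) 0 1 := by
    apply Real.circleAverage_congr_sphere
    intro l hl
    have : ‖l‖ = 1 := by simpa using hl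
    simp [norm_smul, this, mul_comm]
  rw [h1, Real.circleAverage_fun_smul]
  have hd : Differentiable ℂ (fun l : ℂ => G (l • x)) := by fun_prop
  rw [hd.diffContOnCl.circleAverage]
  simp [mul_comm]

theorem pk_coef (x : ℂ) (m : ℕ) :
    Real.circleAverage (fun l : ℂ => (l ^ m)⁻¹ * cexp (l * x)) 0 1 = x ^ m / m.factorial := by
  rw [Real.circleAverage_eq_circleIntegral one_ne_zero]
  have hd : Differentiable ℂ (fun l : ℂ => cexp (l * x)) := by fun_prop
  have h := (hd.diffContOnCl (s := ball 0 1)).circleIntegral_one_div_sub_center_pow_smul one_pos m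
  have h2 : (∮ z in C(0, 1), (z - 0)⁻¹ • ((z ^ m)⁻¹ * cexp (z * x))) =
    ∮ z in C(0, 1), (1 / (z - 0) ^ (m + 1)) • cexp (z * x) := by
    congr 1; ext z; simp [pow_succ]; ring
  rw [h2, h]
  have h3 : (fun l : ℂ => cexp (l * x)) = fun l : ℂ => cexp (x * l) := by ext; rw [mul_comm]
  rw [h3, iteratedDeriv_cexp_const_mul]
  have := Real.pi_ne_zero
  have hf : (m.factorial : ℂ) ≠ 0 := by exact_mod_cast m.factorial_ne_zero
  simp
  field_simp
  simp
end PartOne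

open MeasureTheory Metric Set
set_option linter.unusedSectionVars false
section PartTwo
variable {E : Type*} [NormedAddCommGroup E] [InnerProductSpace ℂ E] [FiniteDimensional ℂ E]
  [MeasurableSpace E] [BorelSpace E] [Nontrivial E]

def PkHom (m : ℕ) (P : E → ℂ) : Prop :=
  Differentiable ℂ P ∧ ∀ (l : ℂ) (x : E), P (l • x) = l ^ m * P x

theorem PkHom.bound {m : ℕ} {P : E → ℂ} (hP : PkHom m P) :
    ∃ C : ℝ, 0 ≤ C ∧ ∀ x, ‖P x‖ ≤ C * Real.exp ‖x‖ := by
  have : ProperSpace E := FiniteDimensional.proper ℂ E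
  obtain ⟨C, hC⟩ := (isCompact_closedBall (0:E) 1).exists_bound_of_continuousOn
    hP.1.continuous.continuousOn
  have hC0 : 0 ≤ C := (norm_nonneg _).trans (hC 0 (by simp))
  have key : ∀ x, ‖P x‖ ≤ C * ‖x‖ ^ m := by
    intro x
    by_cases hx : x = 0
    · subst hx
      have h := hP.2 0 0
      rw [smul_zero] at h
      rw [h, norm_mul, norm_pow, norm_zero, norm_zero, mul_comm]
      exact mul_le_mul_of_nonneg_right (hC 0 (by simp)) (by positivity)
    · have hn : ‖x‖ ≠ 0 := norm_ne_zero_iff.2 hx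
      have h := hP.2 (‖x‖ : ℂ) ((‖x‖ : ℂ)⁻¹ • x)
      rw [smul_smul, mul_inv_cancel₀ (by exact_mod_cast hn), one_smul] at h
      rw [h, norm_mul, norm_pow, mul_comm]
      simp only [norm_real, norm_norm]
      refine mul_le_mul_of_nonneg_right (hC _ ?_) (by positivity)
      simp [norm_smul, hn]
  refine ⟨C * m.factorial, by positivity, fun x => (key x).trans ?_⟩
  rw [mul_assoc]
  refine mul_le_mul_of_nonneg_left ?_ hC0
  have h := Real.pow_div_factorial_le_exp ‖x‖ (norm_nonneg _) m
  have hf : (0:ℝ) < m.factorial := by exact_mod_cast m.factorial_pos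
  rw [div_le_iff₀ hf] at h
  linarith

theorem pk_expb (a A t : ℝ) : Real.exp (A + a * t) * Real.exp (-t ^ 2) ≤
    Real.exp (A + a ^ 2 / 2) * Real.exp (-t ^ 2 / 2) := by
  rw [← Real.exp_add, ← Real.exp_add]
  apply Real.exp_le_exp.2
  nlinarith [sq_nonneg (a - t)]

theorem pk_diff_inner (z : E) : Differentiable ℂ (fun u : E => inner ℂ z u) :=
  (innerSL ℂ z).differentiable

theorem pk_norm_exp_inner_le (w : ℂ) (z u : E) (h : ‖w‖ ≤ ‖z‖ * ‖u‖) :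
    ‖cexp w‖ ≤ Real.exp (‖z‖ * ‖u‖) := by
  rw [Complex.norm_exp]
  exact Real.exp_le_exp.2 ((Complex.re_le_norm _).trans h)

theorem pk_bargmann (μ : Measure E) [μ.IsAddHaarMeasure] {m : ℕ} {P : E → ℂ} (hP : PkHom m P)
    (z : E) :
    ∫ x, P x * cexp (conj (inner ℂ z x)) * Real.exp (-‖x‖ ^ 2) ∂μ =
      P z * ∫ x : E, (Real.exp (-‖x‖ ^ 2) : ℂ) ∂μ := by
  obtain ⟨C, hC0, hC⟩ := hP.bound
  rw [← integral_add_left_eq_self _ z]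
  have hG : Differentiable ℂ (fun u : E => P (z + u) * cexp (- inner ℂ z u)) := by
    have := pk_diff_inner z
    have := hP.1
    fun_prop
  have h := pk_mean μ hG (C * Real.exp (‖z‖ + (1 + ‖z‖) ^ 2 / 2)) ?_
  · simp only [add_zero, inner_zero_right, neg_zero, Complex.exp_zero, mul_one] at h
    rw [← h]
    congr 1
    ext u
    rw [mul_assoc, mul_assoc]
    congr 1
    rw [Complex.ofReal_exp, Complex.ofReal_exp, ← Complex.exp_add, ← Complex.exp_add]
    congr 1
    push_cast
    have h1 : ∀ x : E, (‖x‖ : ℂ) ^ 2 = inner ℂ x x := fun x =>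
      (inner_self_eq_norm_sq_to_K (𝕜 := ℂ) x).symm
    rw [h1, h1]
    simp only [inner_add_left, inner_add_right, map_add, inner_conj_symm]
    ring
  · intro u
    rw [norm_mul, norm_mul]
    have h1 := hC (z + u)
    have h2 : ‖cexp (- inner ℂ z u)‖ ≤ Real.exp (‖z‖ * ‖u‖) :=
      pk_norm_exp_inner_le _ _ _ (by rw [norm_neg]; exact norm_inner_le_norm z u)
    have h3 : Real.exp ‖z + u‖ ≤ Real.exp (‖z‖ + ‖u‖) := Real.exp_le_exp.2 (norm_add_le _ _)
    have h4 : ‖(Real.exp (-‖u‖ ^ 2) : ℂ)‖ = Real.exp (-‖u‖ ^ 2) := by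
      rw [Complex.norm_real, Real.norm_of_nonneg (Real.exp_nonneg _)]
    rw [h4]
    calc ‖P (z + u)‖ * ‖cexp (- inner ℂ z u)‖ * Real.exp (-‖u‖ ^ 2)
        ≤ (C * Real.exp (‖z‖ + ‖u‖)) * Real.exp (‖z‖ * ‖u‖) * Real.exp (-‖u‖ ^ 2) := by
          gcongr
          exact h1.trans (by gcongr)
      _ = C * (Real.exp (‖z‖ + (1 + ‖z‖) * ‖u‖) * Real.exp (-‖u‖ ^ 2)) := by
          rw [mul_assoc C, ← Real.exp_add, mul_assoc]; congr 3; ring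
      _ ≤ C * (Real.exp (‖z‖ + (1 + ‖z‖) ^ 2 / 2) * Real.exp (-‖u‖ ^ 2 / 2)) := by
          exact mul_le_mul_of_nonneg_left (pk_expb _ _ _) hC0
      _ = _ := by ring

theorem pk_gauss_diag (μ : Measure E) [μ.IsAddHaarMeasure] {m : ℕ} {P : E → ℂ} (hP : PkHom m P)
    (z : E) :
    ∫ x, P x * (inner ℂ x z) ^ m * Real.exp (-‖x‖ ^ 2) ∂μ =
      m.factorial * P z * ∫ x : E, (Real.exp (-‖x‖ ^ 2) : ℂ) ∂μ := by
  obtain ⟨C, hC0, hC⟩ := hP.bound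
  have hB := congrArg conj (pk_bargmann μ hP z)
  rw [← integral_conj] at hB
  have hPc := hP.1.continuous
  have hcont : Continuous (fun x : E => conj (P x * cexp (conj (inner ℂ z x)) * Real.exp (-‖x‖ ^ 2))) := by
    have := (pk_diff_inner z).continuous
    exact Complex.continuous_conj.comp (by fun_prop)
  rw [← pk_avg μ hcont (C * Real.exp (0 + (1 + ‖z‖) ^ 2 / 2))] at hB
  · have hav : ∀ x : E, Real.circleAverage (fun l : ℂ => conj (P (l • x) *
        cexp (conj (inner ℂ z (l • x))) * Real.exp (-‖l • x‖ ^ 2))) 0 1 =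
        conj (P x * (inner ℂ x z) ^ m * Real.exp (-‖x‖ ^ 2)) * (m.factorial : ℂ)⁻¹ := by
      intro x
      have h1 : Real.circleAverage (fun l : ℂ => conj (P (l • x) *
        cexp (conj (inner ℂ z (l • x))) * Real.exp (-‖l • x‖ ^ 2))) 0 1 =
        Real.circleAverage (fun l : ℂ => (conj (P x) * Real.exp (-‖x‖ ^ 2)) •
          ((l ^ m)⁻¹ * cexp (l * inner ℂ z x))) 0 1 := by
        apply Real.circleAverage_congr_sphere
        intro l hl
        have hl1 : ‖l‖ = 1 := by simpa using hl
        have hli : conj l = l⁻¹ := by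
          rw [Complex.inv_def, Complex.normSq_eq_norm_sq, hl1]; simp
        have hli2 : conj (l⁻¹) = l := by rw [← hli, Complex.conj_conj]
        simp only [hP.2, map_mul, map_pow, hli, hli2, ← Complex.exp_conj, Complex.conj_conj,
          Complex.conj_ofReal, norm_smul, hl1, one_mul, inner_smul_right, inv_pow, smul_eq_mul]
        ring
      rw [h1, Real.circleAverage_fun_smul, pk_coef, smul_eq_mul]
      simp only [map_mul, map_pow, inner_conj_symm, Complex.conj_ofReal]
      ring
    simp only [hav] at hB
    rw [integral_mul_const, integral_conj, ← map_natCast conj, ← map_inv₀, ← map_mul] at hB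
    have := (starRingEnd ℂ).injective hB
    have hf : (m.factorial : ℂ) ≠ 0 := by exact_mod_cast m.factorial_ne_zero
    rw [← div_eq_mul_inv, div_eq_iff hf] at this
    rw [this]; ring
  · intro x
    rw [RCLike.norm_conj, norm_mul, norm_mul]
    have h1 := hC x
    have h2 : ‖cexp (conj (inner ℂ z x))‖ ≤ Real.exp (‖z‖ * ‖x‖) :=
      pk_norm_exp_inner_le _ _ _ (by rw [RCLike.norm_conj]; exact norm_inner_le_norm z x)
    have h4 : ‖(Real.exp (-‖x‖ ^ 2) : ℂ)‖ = Real.exp (-‖x‖ ^ 2) := by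
      rw [Complex.norm_real, Real.norm_of_nonneg (Real.exp_nonneg _)]
    rw [h4]
    calc ‖P x‖ * ‖cexp (conj (inner ℂ z x))‖ * Real.exp (-‖x‖ ^ 2)
        ≤ (C * Real.exp (‖x‖)) * Real.exp (‖z‖ * ‖x‖) * Real.exp (-‖x‖ ^ 2) := by
          gcongr
      _ = C * (Real.exp (0 + (1 + ‖z‖) * ‖x‖) * Real.exp (-‖x‖ ^ 2)) := by
          rw [mul_assoc C, ← Real.exp_add, mul_assoc]; congr 3; ring
      _ ≤ C * (Real.exp (0 + (1 + ‖z‖) ^ 2 / 2) * Real.exp (-‖x‖ ^ 2 / 2)) := by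
          exact mul_le_mul_of_nonneg_left (pk_expb _ _ _) hC0
      _ = _ := by ring

theorem pk_gauss_off (μ : Measure E) [μ.IsAddHaarMeasure] {m l : ℕ} (hml : l ≠ m) {P : E → ℂ}
    (hP : PkHom m P) (z : E) :
    ∫ x, P x * (inner ℂ x z) ^ l * Real.exp (-‖x‖ ^ 2) ∂μ = 0 := by
  have hp := Complex.isPrimitiveRoot_exp (m + l + 1) (by omega)
  set c := cexp (2 * Real.pi * I / ((m + l + 1 : ℕ) : ℂ)) with hc
  have hn : ‖c‖ = 1 := hp.norm'_eq_one (by omega)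
  have hne : c ≠ 0 := by intro h; rw [h] at hn; simp at hn
  have hli : conj c = c⁻¹ := by
    rw [Complex.inv_def, Complex.normSq_eq_norm_sq, hn]; simp
  have h := (pk_rot μ c hn).integral_comp (Homeomorph.smulOfNeZero c hne).measurableEmbedding
    (fun x => P x * (inner ℂ x z) ^ l * Real.exp (-‖x‖ ^ 2))
  have h2 : ∀ x : E, P (c • x) * (inner ℂ (c • x) z) ^ l * Real.exp (-‖c • x‖ ^ 2) =
      (c ^ m * (c ^ l)⁻¹) * (P x * (inner ℂ x z) ^ l * Real.exp (-‖x‖ ^ 2)) := by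
    intro x
    rw [hP.2, inner_smul_left, norm_smul, hn, hli, one_mul, mul_pow, inv_pow]
    ring
  simp only [h2] at h
  rw [integral_const_mul] at h
  by_contra h0
  have h3 : c ^ m * (c ^ l)⁻¹ = 1 := by
    have := mul_right_cancel₀ h0 (h.trans (one_mul _).symm)
    exact this
  have h4 : c ^ m = c ^ l := by
    rwa [mul_inv_eq_one₀ (pow_ne_zero _ hne)] at h3
  exact hml (hp.pow_inj (by omega) (by omega) h4).symm

theorem pk_polar (μ : Measure E) [μ.IsAddHaarMeasure] (k : ℕ) (h : E → ℂ)
    (hh : ∀ (r : ℝ) (x : E), 0 < r → h ((r : ℂ) • x) = (r : ℂ) ^ k * h x) :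
    ∫ x, h x * Real.exp (-‖x‖ ^ 2) ∂μ = (∫ w, h w ∂μ.toSphere) *
      ((1 / 2 * Real.Gamma ((Module.finrank ℝ E + k : ℝ) / 2) : ℝ) : ℂ) := by
  have : FiniteDimensional ℝ E := FiniteDimensional.complexToReal E
  have hdim : 0 < Module.finrank ℝ E := Module.finrank_pos
  have hrad : ∫ r : Ioi (0:ℝ), (r : ℝ) ^ k * Real.exp (-(r:ℝ) ^ 2) ∂.volumeIoiPow (Module.finrank ℝ E - 1)
      = 1 / 2 * Real.Gamma ((Module.finrank ℝ E + k : ℝ) / 2) := by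
    simp only [Measure.volumeIoiPow, ENNReal.ofReal]
    rw [integral_withDensity_eq_integral_smul,
        integral_subtype_comap measurableSet_Ioi fun a : ℝ ↦ Real.toNNReal (a ^ (Module.finrank ℝ E - 1))
          • (a ^ k * Real.exp (-a ^ 2))]
    · have hg := _root_.integral_rpow_mul_exp_neg_rpow (p := 2) (q := ((Module.finrank ℝ E - 1 + k : ℕ) : ℝ))
        (by norm_num) (by
          have : (0:ℝ) ≤ ((Module.finrank ℝ E - 1 + k : ℕ) : ℝ) := by positivity
          linarith)
      have e1 : (((Module.finrank ℝ E - 1 + k : ℕ) : ℝ) + 1) = Module.finrank ℝ E + k := by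
        have : Module.finrank ℝ E - 1 + k + 1 = Module.finrank ℝ E + k := by omega
        exact_mod_cast this
      rw [e1] at hg
      rw [← hg]
      apply setIntegral_congr_fun measurableSet_Ioi
      intro x hx
      simp only
      rw [NNReal.smul_def, Real.coe_toNNReal _ (pow_nonneg (le_of_lt hx) _), Real.rpow_natCast, pow_add,
        smul_eq_mul]
      norm_num [mul_assoc]
    · exact (measurable_subtype_coe.pow_const _).real_toNNReal
  calc ∫ x, h x * Real.exp (-‖x‖ ^ 2) ∂μ
      = ∫ x : ({(0)}ᶜ : Set E), h x * Real.exp (-‖(x : E)‖ ^ 2) ∂(μ.comap (↑)) := by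
        rw [integral_subtype_comap (measurableSet_singleton _).compl
          fun x : E ↦ h x * (Real.exp (-‖x‖ ^ 2) : ℂ), restrict_compl_singleton]
    _ = ∫ x : sphere (0:E) 1 × Ioi (0:ℝ), h x.1 * (((x.2 : ℝ) ^ k * Real.exp (-(x.2 : ℝ) ^ 2) : ℝ) : ℂ)
          ∂μ.toSphere.prod (.volumeIoiPow (Module.finrank ℝ E - 1)) := by
        rw [← μ.measurePreserving_homeomorphUnitSphereProd.integral_comp
          (Homeomorph.measurableEmbedding _)]
        congr 1
        ext x
        have hx : (x : E) ≠ 0 := x.2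
        have hn : ‖(x : E)‖ ≠ 0 := norm_ne_zero_iff.2 hx
        have e : (x : E) = (‖(x:E)‖ : ℂ) • ((homeomorphUnitSphereProd E x).1 : E) := by
          simp only [homeomorphUnitSphereProd_apply_fst_coe]
          rw [← Complex.coe_smul, smul_smul]
          push_cast
          rw [mul_inv_cancel₀ (by exact_mod_cast hn), one_smul]
        have e2 := hh ‖(x:E)‖ ((homeomorphUnitSphereProd E x).1 : E) (by positivity)
        rw [← e] at e2
        rw [e2]
        simp only [homeomorphUnitSphereProd_apply_snd_coe]
        push_cast
        ring
    _ = _ := by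
        rw [integral_prod_mul (fun w : sphere (0:E) 1 => h w)
          (fun r : Ioi (0:ℝ) => (((r : ℝ) ^ k * Real.exp (-(r : ℝ) ^ 2) : ℝ) : ℂ)),
          integral_complex_ofReal, hrad]

theorem pk_repro (μ : Measure E) [μ.IsAddHaarMeasure] {m : ℕ} (l : ℕ) {P : E → ℂ}
    (hP : PkHom m P) (z : E) (d : ℕ) (hd : Module.finrank ℂ E = d + 1) :
    ((l + d).choose d : ℂ) * ∫ w : sphere (0:E) 1, P w * (inner ℂ (w : E) z) ^ l ∂μ.toSphere =
      if l = m then (μ.toSphere.real univ : ℂ) * P z else 0 := by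
  have hdim : Module.finrank ℝ E = 2 * (d + 1) := by
    rw [← hd]; exact finrank_real_of_complex E
  have hpol := pk_polar μ (m + l) (fun x => P x * (inner ℂ x z) ^ l) (by
    intro r x hr
    simp only [hP.2, inner_smul_left, Complex.conj_ofReal]
    ring)
  split_ifs with hlm
  · subst hlm
    rw [pk_gauss_diag μ hP] at hpol
    have hZ := pk_polar μ 0 (fun _ => 1) (by intros; simp)
    simp only [one_mul, integral_const, smul_eq_mul, mul_one] at hZ
    rw [hZ] at hpol
    have g1 : ((Module.finrank ℝ E : ℝ) + ((l + l : ℕ) : ℝ)) / 2 = ((d + l : ℕ) : ℝ) + 1 := by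
      rw [hdim]; push_cast; ring
    have g2 : ((Module.finrank ℝ E : ℝ) + ((0 : ℕ) : ℝ)) / 2 = (d : ℝ) + 1 := by
      rw [hdim]; push_cast; ring
    rw [g1, g2, Real.Gamma_nat_eq_factorial, Real.Gamma_nat_eq_factorial] at hpol
    have hch : ((l + d).choose d : ℂ) * (d.factorial * l.factorial) = (d + l).factorial := by
      have := Nat.add_choose_mul_factorial_mul_factorial l d
      rw [add_comm d l, ← this]
      have hs : (l + d).choose l = (l + d).choose d := Nat.choose_symm_add
      push_cast [hs]; ring
    have hl : (l.factorial : ℂ) ≠ 0 := by exact_mod_cast l.factorial_ne_zero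
    have hdf : (d.factorial : ℂ) ≠ 0 := by exact_mod_cast d.factorial_ne_zero
    have : (d.factorial * l.factorial : ℂ) ≠ 0 := mul_ne_zero hdf hl
    apply mul_left_cancel₀ this
    push_cast at hpol
    rw [← hch] at hpol
    simp only [Complex.real_smul] at hpol
    linear_combination (-2) * hpol
  · rw [pk_gauss_off μ hlm hP] at hpol
    have : ((1 / 2 * Real.Gamma ((Module.finrank ℝ E + (m + l : ℕ) : ℝ) / 2) : ℝ) : ℂ) ≠ 0 := by
      have hG : 0 < Real.Gamma ((Module.finrank ℝ E + (m + l : ℕ) : ℝ) / 2) := by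
        apply Real.Gamma_pos_of_pos
        rw [hdim]; push_cast; positivity
      exact_mod_cast (by positivity : (1 / 2 * Real.Gamma ((Module.finrank ℝ E + (m + l : ℕ) : ℝ) / 2)) ≠ 0)
    rw [(mul_eq_zero.1 hpol.symm).resolve_right this, mul_zero]
end PartTwo

open MeasureTheory Metric Set
set_option linter.unusedSectionVars false
section PartThree
variable {E : Type*} [NormedAddCommGroup E] [InnerProductSpace ℂ E] [FiniteDimensional ℂ E]
  [MeasurableSpace E] [BorelSpace E] [Nontrivial E]

def PkHP (E : Type*) [NormedAddCommGroup E] [InnerProductSpace ℂ E] (N : ℕ) :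
    Submodule ℂ (E → ℂ) :=
  Submodule.span ℂ {q | ∃ m < N, PkHom m q}

noncomputable def PkK (d N : ℕ) (z w : E) : ℂ :=
  ∑ l ∈ Finset.range N, ((l + d).choose d : ℂ) * (inner ℂ w z) ^ l

theorem PkHom.mul {m l : ℕ} {P Q : E → ℂ} (hP : PkHom m P) (hQ : PkHom l Q) :
    PkHom (m + l) (P * Q) := by
  refine ⟨hP.1.mul hQ.1, fun a x => ?_⟩
  simp only [Pi.mul_apply, hP.2, hQ.2]; ring

theorem pkHP_mul {M N : ℕ} {P Q : E → ℂ} (hP : P ∈ PkHP E M) (hQ : Q ∈ PkHP E N) :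
    P * Q ∈ PkHP E (M + N) := by
  have h := Submodule.mul_mem_mul hP hQ
  rw [PkHP, PkHP, Submodule.span_mul_span] at h
  refine Submodule.span_mono ?_ h
  rintro _ ⟨p, ⟨m, hm, hp⟩, q, ⟨l, hl, hq⟩, rfl⟩
  exact ⟨m + l, by omega, hp.mul hq⟩

theorem pkHP_cont {N : ℕ} {P : E → ℂ} (hP : P ∈ PkHP E N) : Continuous P := by
  induction hP using Submodule.span_induction with
  | mem x h => obtain ⟨m, _, h⟩ := h; exact h.1.continuous
  | zero => exact continuous_const
  | add x y _ _ hx hy => exact hx.add hy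
  | smul a x _ hx => exact hx.const_smul a

theorem pkHom_inner (l : ℕ) (w : E) : PkHom l (fun z : E => (inner ℂ w z) ^ l) := by
  refine ⟨(pk_diff_inner w).pow l, fun a x => ?_⟩
  simp only [inner_smul_right, mul_pow]

theorem pkK_mem (d N : ℕ) (w : E) : (fun z => PkK d N z w) ∈ PkHP E N := by
  have : (fun z => PkK d N z w) = ∑ l ∈ Finset.range N, ((l + d).choose d : ℂ) •
      (fun z : E => (inner ℂ w z) ^ l) := by
    ext z; simp [PkK]
  rw [this]
  refine Submodule.sum_mem _ fun l hl => Submodule.smul_mem _ _ (Submodule.subset_span ?_)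
  exact ⟨l, Finset.mem_range.1 hl, pkHom_inner l w⟩

theorem pkK_conj (d N : ℕ) (z w : E) : conj (PkK d N z w) = PkK d N w z := by
  simp [PkK, map_sum]

theorem pk_int_sphere (μ : Measure E) [μ.IsAddHaarMeasure] {F : Type*} [NormedAddCommGroup F]
    {f : sphere (0:E) 1 → F} (hf : Continuous f) :
    Integrable f μ.toSphere := by
  have : FiniteDimensional ℝ E := FiniteDimensional.complexToReal E
  have : ProperSpace E := FiniteDimensional.proper ℂ E
  exact hf.integrable_of_hasCompactSupport (HasCompactSupport.of_compactSpace f)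

theorem pkHP_repro (μ : Measure E) [μ.IsAddHaarMeasure] (d : ℕ) (hd : Module.finrank ℂ E = d + 1)
    {N N' : ℕ} (hN : N ≤ N') {F : E → ℂ} (hF : F ∈ PkHP E N) (z : E) :
    ∫ w : sphere (0:E) 1, F w * PkK d N' z w ∂μ.toSphere = (μ.toSphere.real univ : ℂ) * F z := by
  have hKc : Continuous (fun w : E => PkK d N' z w) := by
    unfold PkK; fun_prop
  induction hF using Submodule.span_induction with
  | mem x h =>
    obtain ⟨m, hm, h⟩ := h
    have hxc := h.1.continuous
    simp only [PkK, Finset.mul_sum]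
    rw [integral_finsetSum]
    · have : ∀ l ∈ Finset.range N', ∫ w : sphere (0:E) 1, x w * (((l + d).choose d : ℂ) *
          (inner ℂ (w : E) z) ^ l) ∂μ.toSphere =
          if l = m then (μ.toSphere.real univ : ℂ) * x z else 0 := by
        intro l _
        rw [← pk_repro μ l h z d hd, ← integral_const_mul]
        congr 1; ext w; ring
      rw [Finset.sum_congr rfl this, Finset.sum_ite_eq']
      simp [Finset.mem_range, hm.trans_le hN]
    · intro l _
      exact pk_int_sphere μ (by fun_prop)
  | zero => simp
  | add x y hx hy h1 h2 =>
    have := pkHP_cont hx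
    have := pkHP_cont hy
    simp only [Pi.add_apply, add_mul]
    rw [integral_add (pk_int_sphere μ (by fun_prop)) (pk_int_sphere μ (by fun_prop)), h1, h2]
    ring
  | smul a x _ hx =>
    simp only [Pi.smul_apply, smul_eq_mul, mul_assoc]
    rw [integral_const_mul, hx]; ring

theorem pk_ineq (μ : Measure E) [μ.IsAddHaarMeasure] (d : ℕ) (hd : Module.finrank ℂ E = d + 1)
    {M : ℕ} (N : ℕ) {P : E → ℂ} (hP : P ∈ PkHP E M) (C : ℝ) (hC : 0 < C)
    (hb : ∀ w : E, ‖w‖ = 1 → ‖P w‖ ≤ C) {n : ℕ} (z : Fin n → E) (c : Fin n → ℂ) :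
    0 ≤ ∑ i, ∑ j, ((C : ℂ) ^ 2 * PkK d (N + M) (z i) (z j) - P (z i) * conj (P (z j)) *
      PkK d N (z i) (z j)) * c i * conj (c j) := by
  have : FiniteDimensional ℝ E := FiniteDimensional.complexToReal E
  -- general functions
  let L : ℕ → (Fin n → ℂ) → E → ℂ := fun K a => ∑ j, conj (a j) • (fun w => PkK d K w (z j))
  have hLmem : ∀ K a, L K a ∈ PkHP E K := fun K a =>
    Submodule.sum_mem _ fun j _ => Submodule.smul_mem _ _ (pkK_mem d K (z j))
  have hLapp : ∀ K a w, L K a w = ∑ j, conj (a j) * PkK d K w (z j) := by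
    intro K a w; simp [L]
  have hLc : ∀ K a, Continuous (L K a) := fun K a => pkHP_cont (hLmem K a)
  have hLr : ∀ K a K' (F : E → ℂ), K' ≤ K → F ∈ PkHP E K' →
      ∫ w : sphere (0:E) 1, F w * conj (L K a w) ∂μ.toSphere =
        (μ.toSphere.real univ : ℂ) * ∑ j, a j * F (z j) := by
    intro K a K' F hK hF
    have hFc := pkHP_cont hF
    have e : ∀ w : E, F w * conj (L K a w) = ∑ j, a j * (F w * PkK d K (z j) w) := by
      intro w
      rw [hLapp, map_sum, Finset.mul_sum]
      refine Finset.sum_congr rfl fun j _ => ?_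
      rw [map_mul, Complex.conj_conj, pkK_conj]; ring
    simp only [e]
    rw [integral_finsetSum, Finset.mul_sum]
    · refine Finset.sum_congr rfl fun j _ => ?_
      rw [integral_const_mul, pkHP_repro μ d hd hK hF]; ring
    · intro j _
      have hKc : Continuous (fun w : E => PkK d K (z j) w) := by
        unfold PkK; fun_prop
      exact pk_int_sphere μ (by fun_prop)
  set s := μ.toSphere.real univ with hs
  have hspos : 0 < s := by
    have h0 : μ.toSphere ≠ 0 := μ.toSphere_ne_zero
    have : NeZero μ.toSphere := ⟨h0⟩
    exact measureReal_univ_pos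
  let g := L N (fun i => P (z i) * c i)
  let f := L (N + M) c
  have hgc : Continuous g := hLc _ _
  have hfc : Continuous f := hLc _ _
  have hPc : Continuous P := pkHP_cont hP
  have hgg := hLr N (fun i => P (z i) * c i) N g le_rfl (hLmem _ _)
  have hff := hLr (N + M) c (N + M) f le_rfl (hLmem _ _)
  have hPg := hLr (N + M) c (N + M) (P * g) le_rfl (by
    rw [add_comm]; exact pkHP_mul hP (hLmem _ _))
  have hPg' : ∑ j, c j * (P * g) (z j) = ∑ j, (P (z j) * c j) * g (z j) := by
    refine Finset.sum_congr rfl fun j _ => ?_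
    simp only [Pi.mul_apply]; ring
  rw [hPg'] at hPg
  set G := ∑ j, (P (z j) * c j) * g (z j) with hG
  set Fq := ∑ j, c j * f (z j) with hFq
  have hgoal : ∑ i, ∑ j, ((C : ℂ) ^ 2 * PkK d (N + M) (z i) (z j) - P (z i) * conj (P (z j)) *
      PkK d N (z i) (z j)) * c i * conj (c j) = (C : ℂ) ^ 2 * Fq - G := by
    rw [hFq, hG, Finset.mul_sum, ← Finset.sum_sub_distrib]
    refine Finset.sum_congr rfl fun i _ => ?_
    simp only [f, g, hLapp, Finset.mul_sum, map_mul]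
    rw [← Finset.sum_sub_distrib]
    refine Finset.sum_congr rfl fun j _ => ?_
    ring
  rw [hgoal]
  have hsq : ∀ x : ℂ, x * conj x = ((‖x‖ ^ 2 : ℝ) : ℂ) := fun x => by
    rw [Complex.mul_conj, Complex.normSq_eq_norm_sq]
  have hA : (s : ℂ) * G = ((∫ w : sphere (0:E) 1, ‖g w‖ ^ 2 ∂μ.toSphere : ℝ) : ℂ) := by
    rw [← hgg, ← integral_complex_ofReal]
    congr 1; ext w; exact hsq _
  have hB : (s : ℂ) * Fq = ((∫ w : sphere (0:E) 1, ‖f w‖ ^ 2 ∂μ.toSphere : ℝ) : ℂ) := by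
    rw [← hff, ← integral_complex_ofReal]
    congr 1; ext w; exact hsq _
  have hR : ∫ w : sphere (0:E) 1, ((P w * g w) * conj (f w)).re ∂μ.toSphere =
      ∫ w : sphere (0:E) 1, ‖g w‖ ^ 2 ∂μ.toSphere := by
    have h1 := integral_re (𝕜 := ℂ) (μ := μ.toSphere)
      (f := fun w : sphere (0:E) 1 => (P w * g w) * conj (f w))
      (pk_int_sphere μ (by
        have := Complex.continuous_conj
        fun_prop))
    have h2 : ∫ w : sphere (0:E) 1, (P w * g w) * conj (f w) ∂μ.toSphere = (s : ℂ) * G := hPg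
    rw [h2, hA] at h1
    simpa using h1
  set A := ∫ w : sphere (0:E) 1, ‖g w‖ ^ 2 ∂μ.toSphere with hAdef
  set B := ∫ w : sphere (0:E) 1, ‖f w‖ ^ 2 ∂μ.toSphere with hBdef
  have hnn : 0 ≤ ∫ w : sphere (0:E) 1, (C ^ 2 * ‖g w‖ ^ 2 - 2 * C ^ 2 * ((P w * g w) * conj (f w)).re
      + C ^ 4 * ‖f w‖ ^ 2) ∂μ.toSphere := by
    apply integral_nonneg
    intro w
    have hw : ‖(w : E)‖ = 1 := by simpa using w.2
    have h1 : ‖P w * g w‖ ^ 2 ≤ C ^ 2 * ‖g w‖ ^ 2 := by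
      rw [norm_mul, mul_pow]
      have := hb w hw
      gcongr
    have h2 : ‖P w * g w - (C : ℂ) ^ 2 * f w‖ ^ 2 = ‖P w * g w‖ ^ 2 -
      2 * C ^ 2 * ((P w * g w) * conj (f w)).re + C ^ 4 * ‖f w‖ ^ 2 := by
      rw [← Complex.normSq_eq_norm_sq, Complex.normSq_sub, Complex.normSq_eq_norm_sq,
        Complex.normSq_eq_norm_sq, norm_mul ((C:ℂ)^2)]
      have : (P w * g w * conj ((C:ℂ) ^ 2 * f w)) = ((C ^ 2 : ℝ) : ℂ) * (P w * g w * conj (f w)) := by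
        simp; ring
      rw [this, Complex.re_ofReal_mul]
      simp only [norm_pow, Complex.norm_real, Real.norm_of_nonneg hC.le]
      ring
    have h3 : 0 ≤ ‖P w * g w - (C : ℂ) ^ 2 * f w‖ ^ 2 := by positivity
    simp only [Pi.zero_apply]
    linarith
  have hcc := Complex.continuous_conj
  have hre := Complex.continuous_re
  rw [integral_add (pk_int_sphere μ (by fun_prop)) (pk_int_sphere μ (by fun_prop)),
    integral_sub (pk_int_sphere μ (by fun_prop)) (pk_int_sphere μ (by fun_prop)),
    integral_const_mul, integral_const_mul, integral_const_mul, hR, ← hAdef, ← hBdef] at hnn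
  have hfin : 0 ≤ C ^ 2 * B - A := by
    have : 0 ≤ C ^ 2 * (C ^ 2 * B - A) := by nlinarith
    exact nonneg_of_mul_nonneg_right this (by positivity)
  have hs0 : (s : ℂ) ≠ 0 := by exact_mod_cast hspos.ne'
  have : (C : ℂ) ^ 2 * Fq - G = ((s⁻¹ * (C ^ 2 * B - A) : ℝ) : ℂ) := by
    push_cast
    rw [← hA, ← hB]
    field_simp
  rw [this]
  exact_mod_cast mul_nonneg (inv_nonneg.2 hspos.le) hfin

theorem pkK_tendsto (d M : ℕ) (z w : E) (h : ‖(inner ℂ w z : ℂ)‖ < 1) :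
    Filter.Tendsto (fun N => PkK d (N + M) z w) Filter.atTop
      (nhds (((1 - inner ℂ w z) ^ (d + 1))⁻¹)) := by
  have := (hasSum_choose_mul_geometric_of_norm_lt_one d h).tendsto_sum_nat
  rw [one_div] at this
  exact this.comp (Filter.tendsto_add_atTop_nat M)

theorem pk_ineq_lim (μ : Measure E) [μ.IsAddHaarMeasure] (d : ℕ) (hd : Module.finrank ℂ E = d + 1)
    {M : ℕ} {P : E → ℂ} (hP : P ∈ PkHP E M) (C : ℝ) (hC : 0 < C)
    (hb : ∀ w : E, ‖w‖ = 1 → ‖P w‖ ≤ C) {n : ℕ} (z : Fin n → E) (hz : ∀ i, ‖z i‖ < 1)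
    (c : Fin n → ℂ) :
    0 ≤ ∑ i, ∑ j, ((C : ℂ) ^ 2 - P (z i) * conj (P (z j))) *
      ((1 - inner ℂ (z j) (z i)) ^ (d + 1))⁻¹ * c i * conj (c j) := by
  refine ge_of_tendsto' (x := Filter.atTop) ?_ (fun N => pk_ineq μ d hd N hP C hC hb z c)
  refine tendsto_finsetSum _ fun i _ => tendsto_finsetSum _ fun j _ => ?_
  refine Filter.Tendsto.mul_const _ (Filter.Tendsto.mul_const _ ?_)
  have hlt : ‖(inner ℂ (z j) (z i) : ℂ)‖ < 1 := by
    refine (norm_inner_le_norm _ _).trans_lt ?_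
    nlinarith [hz i, hz j, norm_nonneg (z i), norm_nonneg (z j)]
  rw [sub_mul]
  exact ((pkK_tendsto d M _ _ hlt).const_mul _).sub ((pkK_tendsto d 0 _ _ hlt).const_mul _)

end PartThree

open MeasureTheory Metric Set
set_option linter.unusedSectionVars false
section PartFour
variable {E : Type*} [NormedAddCommGroup E] [InnerProductSpace ℂ E] [FiniteDimensional ℂ E]

theorem pk_taylor (φ : E → ℂ) (ha : AnalyticOnNhd ℂ φ (ball 0 1))
    (hb : ∀ x ∈ ball (0:E) 1, ‖φ x‖ ≤ 1) :
    ∃ q : ℕ → E → ℂ, (∀ m, PkHom m (q m)) ∧ ∀ x : E, ‖x‖ ≤ 1 → ∀ r : ℝ, 0 ≤ r → r < 1 → ∀ M : ℕ,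
      ‖(∑ m ∈ Finset.range M, (r : ℂ) ^ m * q m x) - φ ((r : ℂ) • x)‖ ≤ r ^ M / (1 - r) := by
  obtain ⟨p, ρ, hp⟩ := ha 0 (by simp)
  refine ⟨fun m x => p m (fun _ => x), fun m => ⟨?_, ?_⟩, ?_⟩
  · have h1 : Differentiable ℂ (fun x : E => (fun _ : Fin m => x)) := by fun_prop
    exact (p m).contDiff (n := 1) |>.differentiable one_ne_zero |>.comp h1
  · intro l x
    have := (p m).map_smul_univ (fun _ => l) (fun _ => x)
    simpa using this
  intro x hx r hr0 hr1 M
  let f : ℂ → ℂ := fun l => φ (l • x)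
  have hmem : ∀ l : ℂ, ‖l‖ < 1 → l • x ∈ ball (0:E) 1 := by
    intro l hl
    rw [mem_ball_zero_iff, norm_smul]
    exact (mul_le_of_le_one_right (norm_nonneg _) hx).trans_lt hl
  have hdiff : DifferentiableOn ℂ f (ball 0 1) := by
    intro l hl
    have h1 : DifferentiableAt ℂ φ (l • x) :=
      (ha _ (hmem l (by simpa using hl))).differentiableAt
    have h2 : DifferentiableAt ℂ (fun l : ℂ => l • x) l := by fun_prop
    exact (DifferentiableAt.comp (g := φ) l h1 h2).differentiableWithinAt
  have hcoef : ∀ m, iteratedDeriv m f 0 = m.factorial * p m (fun _ => x) := by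
    intro m
    let u : ℂ →L[ℂ] E := ContinuousLinearMap.toSpanSingleton ℂ x
    have hp' : HasFPowerSeriesOnBall φ p (u 0) ρ := by simpa using hp
    have h := hp'.compContinuousLinearMap.factorial_smul 1 m
    rw [iteratedFDeriv_apply_eq_iteratedDeriv_mul_prod] at h
    simp only [FormalMultilinearSeries.compContinuousLinearMap_apply, Finset.prod_const_one, one_smul,
      nsmul_eq_mul] at h
    have e : (φ ∘ u) = f := by ext l; simp [f, u]
    rw [e] at h
    rw [← h]
    congr 2
    ext i
    simp [u]
  have hbound : ∀ m, ‖p m (fun _ => x)‖ ≤ 1 := by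
    intro m
    have h1 : ∀ R : ℝ, R ∈ Ioo (0:ℝ) 1 → ‖p m (fun _ => x)‖ * R ^ m ≤ 1 := by
      intro R hR
      have hsub : closedBall (0:ℂ) R ⊆ ball 0 1 := closedBall_subset_ball hR.2
      have h := Complex.norm_iteratedDeriv_le_of_forall_mem_sphere_norm_le (C := 1) m hR.1
        (f := f) (c := 0) ((hdiff.mono hsub).diffContOnCl_ball subset_rfl) (by
          intro l hl
          have : ‖l‖ = R := by simpa using hl
          exact hb _ (hmem l (by rw [this]; exact hR.2)))
      rw [hcoef, norm_mul, Complex.norm_natCast, mul_div_assoc] at h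
      have hf : (0:ℝ) < m.factorial := by exact_mod_cast m.factorial_pos
      have h2 := le_of_mul_le_mul_left h hf
      rwa [le_div_iff₀ (pow_pos hR.1 m)] at h2
    have ht : Filter.Tendsto (fun R : ℝ => ‖p m (fun _ => x)‖ * R ^ m) (nhdsWithin 1 (Iio 1))
        (nhds (‖p m (fun _ => x)‖ * 1 ^ m)) := by
      apply Filter.Tendsto.mono_left _ nhdsWithin_le_nhds
      exact Continuous.tendsto (by fun_prop) 1
    rw [one_pow, mul_one] at ht
    refine le_of_tendsto ht ?_
    filter_upwards [Ioo_mem_nhdsLT (zero_lt_one (α := ℝ))] with R hR using h1 R hR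
  have hsum := Complex.hasSum_taylorSeries_on_ball hdiff (z := (r : ℂ)) (by
    simp [abs_of_nonneg hr0, hr1])
  have hsum' : HasSum (fun m : ℕ => (r : ℂ) ^ m * p m (fun _ => x)) (φ ((r : ℂ) • x)) := by
    refine hsum.congr_fun ?_
    intro m
    have hf : (m.factorial : ℂ) ≠ 0 := by exact_mod_cast m.factorial_ne_zero
    rw [hcoef]
    simp only [sub_zero, smul_eq_mul]
    field_simp
  have := norm_sub_le_of_geometric_bound_of_hasSum (C := 1) hr1 (f := fun m : ℕ => (r : ℂ) ^ m * p m (fun _ => x))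
    (by
      intro m
      rw [norm_mul, norm_pow, Complex.norm_real, Real.norm_of_nonneg hr0, mul_comm]
      exact mul_le_mul_of_nonneg_right (hbound m) (by positivity)) hsum' M
  simpa using this

theorem pk_main [MeasurableSpace E] [BorelSpace E] [Nontrivial E]
    (d : ℕ) (hd : Module.finrank ℂ E = d + 1)
    (φ : E → ℂ) (ha : AnalyticOnNhd ℂ φ (ball 0 1))
    (hb : ∀ x ∈ ball (0:E) 1, ‖φ x‖ ≤ 1) {n : ℕ} (z : Fin n → E) (hz : ∀ i, ‖z i‖ < 1)
    (c : Fin n → ℂ) :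
    0 ≤ ∑ i, ∑ j, (1 - φ (z i) * conj (φ (z j))) *
      ((1 - inner ℂ (z j) (z i)) ^ (d + 1))⁻¹ * c i * conj (c j) := by
  have : FiniteDimensional ℝ E := FiniteDimensional.complexToReal E
  have : ProperSpace E := FiniteDimensional.proper ℂ E
  obtain ⟨q, hq, hqb⟩ := pk_taylor φ ha hb
  have step : ∀ r : ℝ, r ∈ Ioo (0:ℝ) 1 →
      0 ≤ ∑ i, ∑ j, (1 - φ ((r : ℂ) • z i) * conj (φ ((r : ℂ) • z j))) *
      ((1 - inner ℂ (z j) (z i)) ^ (d + 1))⁻¹ * c i * conj (c j) := by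
    intro r hr
    have hr1 : 0 < 1 - r := sub_pos.2 hr.2
    have hr0 : 0 < r := hr.1
    let P : ℕ → E → ℂ := fun M => ∑ m ∈ Finset.range M, (r : ℂ) ^ m • q m
    have hPapp : ∀ M x, P M x = ∑ m ∈ Finset.range M, (r : ℂ) ^ m * q m x := by
      intro M x; simp [P]
    have hPm : ∀ M, P M ∈ PkHP E M := fun M =>
      Submodule.sum_mem _ fun m hm => Submodule.smul_mem _ _
        (Submodule.subset_span ⟨m, Finset.mem_range.1 hm, hq m⟩)
    have hgeo : Filter.Tendsto (fun M : ℕ => r ^ M / (1 - r)) Filter.atTop (nhds 0) := by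
      simpa using (tendsto_pow_atTop_nhds_zero_of_lt_one hr0.le hr.2).div_const (1 - r)
    have hPb : ∀ M (w : E), ‖w‖ = 1 → ‖P M w‖ ≤ 1 + r ^ M / (1 - r) := by
      intro M w hw
      have h1 := hqb w hw.le r hr0.le hr.2 M
      rw [← hPapp] at h1
      have h2 := hb ((r : ℂ) • w) (by simp [norm_smul, hw, abs_of_pos hr0, hr.2])
      calc ‖P M w‖ = ‖φ ((r : ℂ) • w) + (P M w - φ ((r : ℂ) • w))‖ := by congr 1; ring
        _ ≤ _ := (norm_add_le _ _).trans (add_le_add h2 h1)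
    have hPt : ∀ i, Filter.Tendsto (fun M => P M (z i)) Filter.atTop (nhds (φ ((r : ℂ) • z i))) := by
      intro i
      rw [tendsto_iff_norm_sub_tendsto_zero]
      refine squeeze_zero (fun _ => norm_nonneg _) (fun M => ?_) hgeo
      rw [hPapp]
      exact hqb _ (hz i).le r hr0.le hr.2 M
    refine ge_of_tendsto' (x := Filter.atTop) ?_ (fun M : ℕ => pk_ineq_lim (Measure.addHaar (G := E)) d hd (hPm M)
      (1 + r ^ M / (1 - r)) (by positivity) (hPb M) z hz c)
    refine tendsto_finsetSum _ fun i _ => tendsto_finsetSum _ fun j _ => ?_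
    refine Filter.Tendsto.mul_const _ (Filter.Tendsto.mul_const _ (Filter.Tendsto.mul_const _ ?_))
    have hCt : Filter.Tendsto (fun M : ℕ => ((1 + r ^ M / (1 - r) : ℝ) : ℂ) ^ 2) Filter.atTop
        (nhds 1) := by
      have := (((Complex.continuous_ofReal.tendsto _).comp (hgeo.const_add 1)).pow 2)
      simpa using this
    exact hCt.sub ((hPt i).mul ((Complex.continuous_conj.tendsto _).comp (hPt j)))
  have hφt : ∀ i, Filter.Tendsto (fun r : ℝ => φ ((r : ℂ) • z i)) (nhdsWithin 1 (Iio 1))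
      (nhds (φ (z i))) := by
    intro i
    have h1 : ContinuousAt φ (z i) := (ha (z i) (by simpa using hz i)).continuousAt
    have h2 : Filter.Tendsto (fun r : ℝ => (r : ℂ) • z i) (nhdsWithin 1 (Iio 1)) (nhds (z i)) := by
      have : Filter.Tendsto (fun r : ℝ => (r : ℂ) • z i) (nhds 1) (nhds (((1:ℝ) : ℂ) • z i)) :=
        Continuous.tendsto (by fun_prop) 1
      simp only [Complex.ofReal_one, one_smul] at this
      exact this.mono_left nhdsWithin_le_nhds
    exact h1.tendsto.comp h2
  refine ge_of_tendsto (x := nhdsWithin (1:ℝ) (Iio 1)) ?_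
    (Filter.Eventually.mono (Ioo_mem_nhdsLT (zero_lt_one (α := ℝ))) step)
  refine tendsto_finsetSum _ fun i _ => tendsto_finsetSum _ fun j _ => ?_
  refine Filter.Tendsto.mul_const _ (Filter.Tendsto.mul_const _ (Filter.Tendsto.mul_const _ ?_))
  exact tendsto_const_nhds.sub ((hφt i).mul ((Complex.continuous_conj.tendsto _).comp (hφt j)))

end PartFour

/-- The necessity direction of Theorem 1.1 of the paper for `Ω = 𝔹_d` with `ν = θ`:
if a contractive analytic function on the ball interpolates the data, then the Pick matrix
associated to the Szegő kernel `(1 - ⟨z, w⟩)^{-d}` of `H²(𝔹_d)` is positive semidefinite. -/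
theorem pick_necessity_szego_ball (d n : ℕ) (hd : 1 ≤ d)
    (z : Fin n → Fin d → ℂ) (hz : ∀ i, z i ∈ EucBall d) (w : Fin n → ℂ)
    (φ : (Fin d → ℂ) → ℂ) (hφa : AnalyticOnNhd ℂ φ (EucBall d))
    (hφb : ∀ ζ ∈ EucBall d, ‖φ ζ‖ ≤ 1) (hφi : ∀ i, φ (z i) = w i) :
    ∀ c : Fin n → ℂ,
      0 ≤ ∑ i, ∑ j, (1 - w i * conj (w j)) *
        ((1 - ∑ k, z i k * conj (z j k)) ^ d)⁻¹ * c i * conj (c j) := by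
  intro c
  obtain ⟨d, rfl⟩ : ∃ d', d = d' + 1 := ⟨d - 1, by omega⟩
  let L : EuclideanSpace ℂ (Fin (d + 1)) ≃L[ℂ] (Fin (d + 1) → ℂ) := EuclideanSpace.equiv _ _
  have hmem : ∀ x : EuclideanSpace ℂ (Fin (d + 1)), ‖x‖ < 1 ↔ L x ∈ EucBall (d + 1) := by
    intro x
    have : ∑ k, ‖L x k‖ ^ 2 = ‖x‖ ^ 2 := (EuclideanSpace.norm_sq_eq x).symm
    show _ ↔ ∑ k, ‖L x k‖ ^ 2 < 1
    rw [this, sq_lt_one_iff₀ (norm_nonneg _)]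
  have h := pk_main (E := EuclideanSpace ℂ (Fin (d + 1))) d (by simp) (fun x => φ (L x))
    (by
      intro x hx
      have h1 := hφa (L x) ((hmem x).1 (by simpa using hx))
      exact h1.comp ((L : EuclideanSpace ℂ (Fin (d + 1)) →L[ℂ] (Fin (d + 1) → ℂ)).analyticAt x))
    (fun x hx => hφb _ ((hmem x).1 (by simpa using hx)))
    (fun i => L.symm (z i)) (fun i => (hmem _).2 (by simpa using hz i)) c
  have hin : ∀ i j, inner ℂ (L.symm (z j)) (L.symm (z i)) = ∑ k, z i k * conj (z j k) := by
    intro i j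
    rw [PiLp.inner_apply]
    rfl
  simpa only [hin, ContinuousLinearEquiv.apply_symm_apply, hφi] using h
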